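/- arXiv:2009.09532 — 2 statements merged into one kernel-verified Lean document; each statement's English description precedes it below -/
import Mathlib

section
/- Let k ∈ ℂ with Im k ≤ 0. Let u, r : ℝ → ℂ with u twice continuously differentiable on [0,∞), r continuously differentiable on [0,∞), satisfying u(x) − u''(x) = −r'(x) for all x ≥ 0. Assume u, u', r are integrable on (0,∞) and u(x) → 0, u'(x) → 0, r(x) → 0 as x → ∞. Then (1 + k²) ∫₀^∞ e^{-ikx} u(x) dx = −ik ∫₀^∞ e^{-ikx} r(x) dx + r(0) − u'(0) − ik u(0). -/
open Complex MeasureTheory Filter Set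

/-!
Since `(u' - r)' = u'' - r' = u`, the function `F x = e^{-ikx} (u' x - r x + i k u x)` satisfies
`F' x = e^{-ikx} ((1 + k²) u x + i k r x)`: the two terms in `u'` cancel. As `|e^{-ikx}| ≤ 1` for
`x ≥ 0`, the derivative `F'` is integrable and `F` tends to `0` at infinity, so the fundamental
theorem of calculus gives `∫ F' = -F 0`, which is the claim.
-/

theorem norm_exp_neg_I_mul_le_one {k : ℂ} (hk : k.im ≤ 0) {x : ℝ} (hx : 0 ≤ x) :
    ‖Complex.exp (-(Complex.I * k * x))‖ ≤ 1 := by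
  rw [Complex.norm_exp, Real.exp_le_one_iff]
  simpa using mul_nonpos_of_nonpos_of_nonneg hk hx

theorem integrableOn_exp_neg_I_mul {k : ℂ} (hk : k.im ≤ 0) {f : ℝ → ℂ}
    (hf : IntegrableOn f (Ioi 0)) :
    IntegrableOn (fun x : ℝ => Complex.exp (-(Complex.I * k * x)) * f x) (Ioi 0) := by
  refine Integrable.bdd_mul (c := 1) hf ?_ ?_
  · exact (by fun_prop : Continuous fun x : ℝ =>
      Complex.exp (-(Complex.I * k * x))).aestronglyMeasurable
  · filter_upwards [ae_restrict_mem measurableSet_Ioi] with x hx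
    exact norm_exp_neg_I_mul_le_one hk (le_of_lt hx)

theorem hasDerivAt_exp_neg_I_mul (k : ℂ) (x : ℝ) :
    HasDerivAt (fun x : ℝ => Complex.exp (-(Complex.I * k * x)))
      (Complex.exp (-(Complex.I * k * x)) * (-(Complex.I * k))) x := by
  have h := ((Complex.ofRealCLM.hasDerivAt (x := x)).const_mul (Complex.I * k)).neg.cexp
  simpa using h

/-- Second component of the global relation: for `Im k ≤ 0`,
if `u - u'' = -r'` on `[0,∞)` with suitable decay and integrability, then
`(1+k²) ∫₀^∞ e^{-ikx} u = -ik ∫₀^∞ e^{-ikx} r + r(0) - u'(0) - ik u(0)`. -/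
theorem stmt4 (k : ℂ) (hk : k.im ≤ 0) (u u' u'' r r' : ℝ → ℂ)
    (hu' : ∀ x ∈ Ici (0:ℝ), HasDerivWithinAt u (u' x) (Ici 0) x)
    (hu'' : ∀ x ∈ Ici (0:ℝ), HasDerivWithinAt u' (u'' x) (Ici 0) x)
    (hu''c : ContinuousOn u'' (Ici 0))
    (hr' : ∀ x ∈ Ici (0:ℝ), HasDerivWithinAt r (r' x) (Ici 0) x)
    (hr'c : ContinuousOn r' (Ici 0))
    (hode : ∀ x : ℝ, 0 ≤ x → u x - u'' x = -r' x)
    (hu_int : IntegrableOn u (Ioi 0))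
    (hu'_int : IntegrableOn u' (Ioi 0))
    (hr_int : IntegrableOn r (Ioi 0))
    (hu_lim : Tendsto u atTop (nhds 0))
    (hu'_lim : Tendsto u' atTop (nhds 0))
    (hr_lim : Tendsto r atTop (nhds 0)) :
    (1 + k ^ 2) * ∫ x in Ioi (0:ℝ), Complex.exp (-(Complex.I * k * x)) * u x =
      -(Complex.I * k) * (∫ x in Ioi (0:ℝ), Complex.exp (-(Complex.I * k * x)) * r x)
        + r 0 - u' 0 - Complex.I * k * u 0 := by
  have hE_u := integrableOn_exp_neg_I_mul hk hu_int
  have hE_r := integrableOn_exp_neg_I_mul hk hr_int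
  have hG_lim : Tendsto (fun x => u' x - r x + Complex.I * k * u x) atTop (nhds 0) := by
    simpa using (hu'_lim.sub hr_lim).add (hu_lim.const_mul (Complex.I * k))
  have hF_lim : Tendsto (fun x : ℝ => Complex.exp (-(Complex.I * k * x)) *
      (u' x - r x + Complex.I * k * u x)) atTop (nhds 0) := by
    refine squeeze_zero_norm' ?_ (by simpa only [norm_zero] using hG_lim.norm)
    filter_upwards [eventually_ge_atTop 0] with x hx
    rw [norm_mul]
    exact mul_le_of_le_one_left (norm_nonneg _) (norm_exp_neg_I_mul_le_one hk hx)
  have hF_cont : ContinuousWithinAt (fun x : ℝ => Complex.exp (-(Complex.I * k * x)) *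
      (u' x - r x + Complex.I * k * u x)) (Ici 0) 0 := by
    have h0 : (0 : ℝ) ∈ Ici (0 : ℝ) := self_mem_Ici
    exact (hasDerivAt_exp_neg_I_mul k 0).continuousAt.continuousWithinAt.mul
      (((hu'' 0 h0).continuousWithinAt.sub (hr' 0 h0).continuousWithinAt).add
        (continuousWithinAt_const.mul (hu' 0 h0).continuousWithinAt))
  have hF_deriv : ∀ x ∈ Ioi (0 : ℝ), HasDerivAt (fun x : ℝ =>
      Complex.exp (-(Complex.I * k * x)) * (u' x - r x + Complex.I * k * u x))
      ((1 + k ^ 2) * (Complex.exp (-(Complex.I * k * x)) * u x) +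
        Complex.I * k * (Complex.exp (-(Complex.I * k * x)) * r x)) x := by
    intro x hx
    have hx0 : (0 : ℝ) ≤ x := le_of_lt hx
    have hn : Ici (0 : ℝ) ∈ nhds x := Ici_mem_nhds hx
    have h := (hasDerivAt_exp_neg_I_mul k x).mul
      ((((hu'' x hx0).hasDerivAt hn).sub ((hr' x hx0).hasDerivAt hn)).add
        (((hu' x hx0).hasDerivAt hn).const_mul (Complex.I * k)))
    refine h.congr_deriv ?_
    simp only [Pi.add_apply, Pi.sub_apply]
    linear_combination (-Complex.exp (-(Complex.I * k * x))) * hode x hx0 -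
      Complex.exp (-(Complex.I * k * x)) * k ^ 2 * u x * Complex.I_sq
  have hFTC := integral_Ioi_of_hasDerivAt_of_tendsto hF_cont hF_deriv
    ((hE_u.const_mul (1 + k ^ 2)).add (hE_r.const_mul (Complex.I * k))) hF_lim
  rw [integral_add (hE_u.const_mul _) (hE_r.const_mul _), integral_const_mul,
    integral_const_mul] at hFTC
  simp only [Complex.ofReal_zero, mul_zero, neg_zero, Complex.exp_zero, one_mul] at hFTC
  linear_combination hFTC
end

section
/- For every integer j ≥ 0 and every real r with 0 < r < 2, the circle integral ∮_{C(i,r)} k^{2j+1}/(1+k²)^{j+2} dk = 0, where ∮_{C(i,r)} g(k) dk denotes ∫₀^{2π} g(i + r e^{iθ}) · i r e^{iθ} dθ, the integral over the positively oriented circle of radius r centered at i. -/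
/-!
The integrand has a single-valued primitive on `ℂ ∖ {i, -i}`, namely
`(k² / (1 + k²))^(j+1) / (2 (j+1))`, because `(k² / (1 + k²))' = 2k / (1 + k²)²`.
The circle `|k - i| = r` avoids both poles, as `i` and `-i` lie at distance `0` and `2` from its
centre, so the integral of the derivative of this primitive around it vanishes
(`circleIntegral.integral_eq_zero_of_hasDerivWithinAt`).
-/

open Complex Real

theorem one_add_sq_ne_zero_of_mem_sphere {r : ℝ} (hr0 : 0 < r) (hr2 : r < 2) {k : ℂ}
    (hk : k ∈ Metric.sphere Complex.I r) : 1 + k ^ 2 ≠ 0 := by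
  intro h
  rw [mem_sphere_iff_norm] at hk
  have hfac : (k - Complex.I) * (k + Complex.I) = 0 := by
    linear_combination h - Complex.I_sq
  rcases mul_eq_zero.mp hfac with h1 | h1
  · rw [h1, norm_zero] at hk
    exact hr0.ne hk
  · have h2 : k - Complex.I = -2 * Complex.I := by linear_combination h1
    rw [h2] at hk
    norm_num at hk
    exact hr2.ne hk.symm

theorem hasDerivAt_primitive (j : ℕ) {k : ℂ} (hk : 1 + k ^ 2 ≠ 0) :
    HasDerivAt (fun z : ℂ => (z ^ 2 / (1 + z ^ 2)) ^ (j + 1) / (2 * ((j : ℂ) + 1)))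
      (k ^ (2 * j + 1) / (1 + k ^ 2) ^ (j + 2)) k := by
  have hj : (j : ℂ) + 1 ≠ 0 := Nat.cast_add_one_ne_zero j
  have hsq : HasDerivAt (fun z : ℂ => z ^ 2) (2 * k) k := by
    simpa using hasDerivAt_pow 2 k
  have h := (((hsq.div (hsq.const_add 1) hk).pow (j + 1)).div_const (2 * ((j : ℂ) + 1)))
  refine h.congr_deriv ?_
  simp only [Pi.div_apply, Nat.add_sub_cancel, Nat.cast_add, Nat.cast_one, div_pow]
  field_simp
  ring

/-- For `j ≥ 0` and `0 < r < 2`,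
`∮_{C(i,r)} k^{2j+1}/(1+k²)^{j+2} dk = 0`. -/
theorem stmt11 (j : ℕ) (r : ℝ) (hr0 : 0 < r) (hr2 : r < 2) :
    (∮ k in C(Complex.I, r), k ^ (2 * j + 1) / (1 + k ^ 2) ^ (j + 2)) = 0 := by
  exact circleIntegral.integral_eq_zero_of_hasDerivWithinAt hr0.le fun k hk =>
    (hasDerivAt_primitive j (one_add_sq_ne_zero_of_mem_sphere hr0 hr2 hk)).hasDerivWithinAt
end
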